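/- arXiv:1406.0402 — 4 statements merged into one kernel-verified Lean document; each statement's English description precedes it below -/
import Mathlib

section
/- Let n be an odd positive integer and let a, b be integers with n dividing b. Then (a+b)^n - a^n - b^n is congruent to n·a^{n-1}·b modulo n^3. (Refinement of the expansion (I.5): the leading contribution of the truncated binomial series when n | b is the term n·a^{n-1}·b.) -/
theorem aux_expand (a b : ℤ) (j : ℕ) : ∃ k : ℤ, (a + b)^(2*j+3) =
    a^(2*j+3) + (2*j+3) * a^(2*j+2) * b + (2*j+3)*(j+1) * a^(2*j+1) * b^2 + k * b^3 := by
  induction j with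
  | zero => exact ⟨1, by push_cast; ring⟩
  | succ j ih =>
    obtain ⟨k, hk⟩ := ih
    refine ⟨k*(a+b)^2 + 2*a*((2*j+3)*(j+1)*a^(2*j+1)) + (2*j+3)*a^(2*j+1)*a
      + (2*j+3)*(j+1)*a^(2*j+1)*b, ?_⟩
    have h : (a+b)^(2*(j+1)+3) = (a+b)^(2*j+3) * (a+b)^2 := by ring
    rw [h, hk]
    push_cast
    ring

theorem stmt_1 (n : ℕ) (hn : 0 < n) (hodd : Odd n) (a b : ℤ) (hb : (n : ℤ) ∣ b) :
    (a + b)^n - a^n - b^n ≡ (n : ℤ) * a^(n - 1) * b [ZMOD (n : ℤ)^3] := by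
  obtain ⟨m, rfl⟩ := hodd
  obtain ⟨c, hc⟩ := hb
  rcases m with _ | j
  · simp [Int.modEq_one]
  · obtain ⟨k, hk⟩ := aux_expand a b j
    have e1 : 2 * (j + 1) + 1 = 2 * j + 3 := by ring
    have e2 : 2 * j + 3 - 1 = 2 * j + 2 := by omega
    rw [e1] at hc ⊢
    rw [e2, hk]
    apply Int.ModEq.symm
    rw [Int.modEq_iff_dvd]
    have hb3 : b^(2*j+3) = b^(2*j) * b^3 := by ring
    rw [hb3]
    refine ⟨(j+1) * a^(2*j+1) * c^2 + k * c^3 - b^(2*j) * c^3, ?_⟩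
    generalize b^(2*j) = B
    rw [hc]
    push_cast
    ring
end

section
/- Let n be an odd positive integer and let a, b be integers such that n divides a + b. Then n^2 divides U(a,b) = (a+b)^n - a^n - b^n. (Result (I.8b), case 2 of Section I for odd n.) -/
theorem stmt_2 (n : ℕ) (hn : 0 < n) (hodd : Odd n) (a b : ℤ) (hab : (n : ℤ) ∣ a + b) :
    (n : ℤ)^2 ∣ (a + b)^n - a^n - b^n := by
  rcases Nat.lt_or_ge n 2 with h | h
  · obtain rfl : n = 1 := by omega
    simp
  · have h1 : (n : ℤ)^2 ∣ (a + b)^n :=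
      (pow_dvd_pow_of_dvd hab 2).trans (pow_dvd_pow _ h)
    have h2 : (n : ℤ)^(1+1) ∣ a^(n^1) - (-b)^(n^1) :=
      dvd_sub_pow_of_dvd_sub (by simpa using hab) 1
    rw [pow_one, hodd.neg_pow] at h2
    have h3 : (n : ℤ)^2 ∣ (a + b)^n - (a^n - -b^n) := dvd_sub h1 h2
    have h4 : (a + b)^n - a^n - b^n = (a + b)^n - (a^n - -b^n) := by
      generalize (a + b)^n = x
      generalize a^n = y
      generalize b^n = z
      ring
    rw [h4]
    exact h3
end

section
/- Let n be an odd positive integer and let a, b, c be integers such that n divides a + b and n divides c. Then n^2 divides U(a,b,c) = (a+b+c)^n - a^n - b^n - c^n. (Result (II.4a), case 2 of Section II for odd n.) -/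
theorem stmt_11 (n : ℕ) (hn : 0 < n) (hodd : Odd n) (a b c : ℤ)
    (hab : (n : ℤ) ∣ a + b) (hc : (n : ℤ) ∣ c) :
    (n : ℤ)^2 ∣ (a + b + c)^n - a^n - b^n - c^n := by
  rcases Nat.lt_or_ge n 2 with h | h
  · obtain rfl : n = 1 := by omega
    simp
  · have h1 : (n : ℤ)^2 ∣ (a + b + c)^n :=
      (pow_dvd_pow _ h).trans (pow_dvd_pow_of_dvd (dvd_add hab hc) n)
    have h2 : (n : ℤ)^2 ∣ c^n :=
      (pow_dvd_pow _ h).trans (pow_dvd_pow_of_dvd hc n)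
    have h3 : (n : ℤ)^2 ∣ a^n + b^n := by
      obtain ⟨k, hk⟩ := hab
      obtain ⟨m, hm⟩ := Polynomial.powAddExpansion (-b) ((n : ℤ) * k) n
      have ha : a = -b + n * k := by linarith
      rw [ha, hm, hodd.neg_pow]
      exact ⟨(-b)^(n-1) * k + m * k^2, by ring⟩
    have h4 := dvd_sub (dvd_sub h1 h3) h2
    have e : (a + b + c)^n - a^n - b^n - c^n = (a + b + c)^n - (a^n + b^n) - c^n := by ring
    rw [e]
    exact h4
end

section
/- Let n be an even positive integer and let a, b, c be integers such that n divides a + b and n divides c. Then (a+b+c)^n - a^n - b^n - c^n is congruent to -2·a^n modulo n^2. (Precise form of result (II.4b), case 2 of Section II for even n: the divisibility of the truncated trinomial series by n is governed by that of 2a^n.) -/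
theorem stmt_12 (n : ℕ) (hn : 0 < n) (heven : Even n) (a b c : ℤ)
    (hab : (n : ℤ) ∣ a + b) (hc : (n : ℤ) ∣ c) :
    (a + b + c)^n - a^n - b^n - c^n ≡ -2 * a^n [ZMOD (n : ℤ)^2] := by
  have h2 : 2 ≤ n := by
    obtain ⟨k, hk⟩ := heven
    omega
  have key : ∀ x : ℤ, (n : ℤ) ∣ x → (n : ℤ)^2 ∣ x^n := fun x hx =>
    (pow_dvd_pow_of_dvd hx 2).trans (pow_dvd_pow x h2)
  have h1 := key _ (dvd_add hab hc)
  have h3 := key _ hc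
  have hab' : (n : ℤ) ∣ a - (-b) := by simpa using hab
  have h4 : (n : ℤ)^2 ∣ a^n - b^n := by
    have hs := dvd_geom_sum₂_self hab'
    have hm := mul_dvd_mul hs hab'
    rw [geom_sum₂_mul, heven.neg_pow] at hm
    rwa [pow_two]
  apply Int.ModEq.symm
  rw [Int.modEq_iff_dvd]
  have h5 := dvd_add (dvd_sub h1 h3) h4
  have h6 : (a + b + c)^n - a^n - b^n - c^n - -2 * a^n
      = (a + b + c)^n - c^n + (a^n - b^n) := by ring
  rw [h6]
  exact h5
end
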